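/- For each n > 3, the semigroup T_n(2) of all upper triangular n×n matrices over the two-element field is nonfinitely based. -/

import Mathlib

/-! ### Identities and finite bases -/

/-- A semigroup `S` satisfies the identity `u ≈ v` (for words `u`, `v` in the free semigroup on
the countably infinite set of variables `ℕ`) if every homomorphism from the free semigroup to
`S` — equivalently, every substitution `f : ℕ → S` — equalizes `u` and `v`. -/
def Satisfies (S : Type*) [Semigroup S] (u v : FreeSemigroup ℕ) : Prop :=
  ∀ f : ℕ → S, FreeSemigroup.lift f u = FreeSemigroup.lift f v

/-- A semigroup is finitely based if there is a finite set of identities it satisfies such that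
every semigroup satisfying those identities satisfies every identity of `S`. -/
def FinitelyBased (S : Type*) [Semigroup S] : Prop :=
  ∃ B : Finset (FreeSemigroup ℕ × FreeSemigroup ℕ),
    (∀ p ∈ B, Satisfies S p.1 p.2) ∧
    ∀ (T : Type) [Semigroup T], (∀ p ∈ B, Satisfies T p.1 p.2) →
      ∀ u v : FreeSemigroup ℕ, Satisfies S u v → Satisfies T u v

/-- `T` belongs to the variety generated by `S`: `T` satisfies every identity of `S`. -/
def InVarietyOf (T S : Type*) [Semigroup T] [Semigroup S] : Prop :=
  ∀ u v : FreeSemigroup ℕ, Satisfies S u v → Satisfies T u v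

/-! ### Upper triangular matrices over the two-element field -/

/-- The multiplicative semigroup `T_n(2)` of all upper triangular `n × n` matrices over the
two-element field `𝔽₂ = ZMod 2`. -/
def TriSub (n : ℕ) : Subsemigroup (Matrix (Fin n) (Fin n) (ZMod 2)) where
  carrier := {A | A.BlockTriangular id}
  mul_mem' := fun ha hb => ha.mul hb


namespace TnProof

/-- The list of letters of a word. -/
def wl (w : FreeSemigroup ℕ) : List ℕ := w.head :: w.tail

lemma wl_inj {u v : FreeSemigroup ℕ} (h : wl u = wl v) : u = v := by
  cases u; cases v; simp [wl] at h; simp [h]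

lemma wl_mul (u v : FreeSemigroup ℕ) : wl (u * v) = wl u ++ wl v := by
  simp [wl, FreeSemigroup.head_mul, FreeSemigroup.tail_mul]

lemma wl_of (x : ℕ) : wl (FreeSemigroup.of x) = [x] := rfl

lemma wl_ne (u : FreeSemigroup ℕ) : wl u ≠ [] := by simp [wl]

lemma exists_wl (l : List ℕ) (h : l ≠ []) : ∃ u, wl u = l := by
  cases l with
  | nil => exact absurd rfl h
  | cons a t => exact ⟨⟨a, t⟩, rfl⟩

lemma wl_lift (φ : ℕ → FreeSemigroup ℕ) (p : FreeSemigroup ℕ) :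
    wl (FreeSemigroup.lift φ p) = (wl p).flatMap (fun x => wl (φ x)) := by
  induction p using FreeSemigroup.recOnMul with
  | ih1 x => simp [wl_of]
  | ih2 x y hx hy => rw [map_mul, wl_mul, wl_mul, hy, hx]; simp

lemma coe_lift {n : ℕ} (f : ℕ → TriSub n) (p : FreeSemigroup ℕ) :
    ((FreeSemigroup.lift f p : TriSub n) : Matrix (Fin n) (Fin n) (ZMod 2)) =
      ((wl p).map (fun x => (f x : Matrix (Fin n) (Fin n) (ZMod 2)))).prod := by
  induction p using FreeSemigroup.recOnMul with
  | ih1 x => simp [wl_of]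
  | ih2 x y hx hy => rw [map_mul, wl_mul, MulMemClass.coe_mul, hx, hy]; simp

lemma satisfies_iff {n : ℕ} (p q : FreeSemigroup ℕ) :
    Satisfies (TriSub n) p q ↔ ∀ f : ℕ → Matrix (Fin n) (Fin n) (ZMod 2),
      (∀ x, (f x).BlockTriangular id) → ((wl p).map f).prod = ((wl q).map f).prod := by
  constructor
  · intro h f hf
    have := congrArg Subtype.val (h (fun x => ⟨f x, hf x⟩))
    rw [coe_lift, coe_lift] at this
    exact this
  · intro h f
    apply Subtype.ext
    rw [coe_lift, coe_lift]
    exact h _ (fun x => (f x).2)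

/-- The syntactic congruence of a single word. -/
def synCon (u : FreeSemigroup ℕ) : Con (FreeSemigroup ℕ) where
  r w w' := ∀ a b : List ℕ, a ++ wl w ++ b = wl u ↔ a ++ wl w' ++ b = wl u
  iseqv := ⟨fun _ _ _ => Iff.rfl, fun h a b => (h a b).symm,
    fun h h' a b => (h a b).trans (h' a b)⟩
  mul' := by
    intro w x y z h h' a b
    rw [wl_mul, wl_mul]
    have h1 := h a (wl y ++ b)
    have h2 := h' (a ++ wl x) b
    simp only [List.append_assoc] at *
    rw [h1, h2]

lemma not_fb_of {S : Type*} [Semigroup S]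
    (H : ∀ B : Finset (FreeSemigroup ℕ × FreeSemigroup ℕ), (∀ p ∈ B, Satisfies S p.1 p.2) →
      ∃ u v, Satisfies S u v ∧ u ≠ v ∧
        ∀ p ∈ B, ∀ φ : ℕ → FreeSemigroup ℕ, ∀ a b : List ℕ,
          (a ++ wl (FreeSemigroup.lift φ p.1) ++ b = wl u → p.1 = p.2) ∧
          (a ++ wl (FreeSemigroup.lift φ p.2) ++ b = wl u → p.1 = p.2)) :
    ¬ FinitelyBased S := by
  rintro ⟨B, hB, hall⟩
  obtain ⟨u, v, huv, hne, hiso⟩ := H B hB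
  have key := hall (synCon u).Quotient ?_ u v huv
  · have h1 := key (fun x => ((FreeSemigroup.of x : FreeSemigroup ℕ) : (synCon u).Quotient))
    have h2 : ∀ w, FreeSemigroup.lift
        (fun x => ((FreeSemigroup.of x : FreeSemigroup ℕ) : (synCon u).Quotient)) w
          = (w : (synCon u).Quotient) := by
      intro w
      induction w using FreeSemigroup.recOnMul with
      | ih1 x => simp
      | ih2 x y hx hy => rw [map_mul, hx, hy]; simp
    rw [h2, h2, Con.eq] at h1
    have h3 := (h1 [] []).1 (by simp)
    simp at h3
    exact hne (wl_inj h3).symm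
  · intro p hp f
    have hf : ∀ x, ∃ w : FreeSemigroup ℕ, (w : (synCon u).Quotient) = f x := fun x =>
      Quotient.exists_rep (f x)
    choose φ hφ using hf
    have h2 : ∀ w, FreeSemigroup.lift f w = ((FreeSemigroup.lift φ w : FreeSemigroup ℕ) : (synCon u).Quotient) := by
      intro w
      induction w using FreeSemigroup.recOnMul with
      | ih1 x => simp [hφ]
      | ih2 x y hx hy => rw [map_mul, hx, hy]; simp
    rw [h2, h2, Con.eq]
    intro a b
    constructor
    · intro h
      have := (hiso p hp φ a b).1 h
      rw [← this]; exact h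
    · intro h
      have := (hiso p hp φ a b).2 h
      rw [this]; exact h

/-! ### Partial automata as triangular matrices -/

/-- Run of a partial automaton. -/
def arun {σ : Type} (δ : ℕ → σ → Option σ) : List ℕ → σ → Option σ
  | [], i => some i
  | x :: l, i => (δ x i).bind (arun δ l)

lemma arun_append {σ : Type} (δ : ℕ → σ → Option σ) (l l' : List ℕ) (i : σ) :
    arun δ (l ++ l') i = (arun δ l i).bind (arun δ l') := by
  induction l generalizing i with
  | nil => simp [arun]
  | cons x l ih =>
    simp only [List.cons_append, arun]
    cases δ x i with
    | none => simp
    | some j => simp [ih]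

/-- Matrix of a letter in a partial automaton. -/
def amat {n : ℕ} (δ : ℕ → Fin n → Option (Fin n)) (x : ℕ) : Matrix (Fin n) (Fin n) (ZMod 2) :=
  fun i j => if δ x i = some j then 1 else 0

lemma amat_prod {n : ℕ} (δ : ℕ → Fin n → Option (Fin n)) (l : List ℕ) (i j : Fin n) :
    (l.map (amat δ)).prod i j = if arun δ l i = some j then 1 else 0 := by
  induction l generalizing i with
  | nil => simp [arun, Matrix.one_apply]
  | cons x l ih =>
    simp only [List.map_cons, List.prod_cons, Matrix.mul_apply, arun, ih, amat]
    rcases Option.eq_none_or_eq_some (δ x i) with h | ⟨k, h⟩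
    · simp [h]
    · simp only [h, Option.some.injEq, ite_mul, one_mul, zero_mul, Finset.sum_ite_eq,
        Finset.mem_univ, if_true, Option.bind_some]

lemma arun_eq_of_sat {n : ℕ} {P Q : List ℕ}
    (h : ∀ f : ℕ → Matrix (Fin n) (Fin n) (ZMod 2),
      (∀ x, (f x).BlockTriangular id) → (P.map f).prod = (Q.map f).prod)
    (δ : ℕ → Fin n → Option (Fin n)) (hδ : ∀ x i j, δ x i = some j → i ≤ j) (i j : Fin n) :
    arun δ P i = some j ↔ arun δ Q i = some j := by
  have := congrFun (congrFun (h (amat δ) ?_) i) j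
  · rw [amat_prod, amat_prod] at this
    split_ifs at this <;> simp_all
  · intro x i j hij
    simp only [amat]
    rw [if_neg]
    intro hh
    exact absurd (hδ x i j hh) (not_le.mpr hij)

/-- The four-state test automaton. -/
def tst {n : ℕ} (hn : 3 < n) (t : ℕ) (s : Fin n) (D : List ℕ) (z y : ℕ) (x : ℕ) (i : Fin n) :
    Option (Fin n) :=
  if i.val = 0 then (if x = t then some s else some i)
  else if i.val = 1 then (if x ∈ D then some i else if x = z then some ⟨2, by omega⟩ else none)
  else if i.val = 2 then (if x = y then some ⟨3, by omega⟩ else none)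
  else if i.val = 3 then some i else none

lemma tst_le {n : ℕ} (hn : 3 < n) (t : ℕ) (s : Fin n) (D : List ℕ) (z y : ℕ) (x : ℕ) (i j : Fin n)
    (h : tst hn t s D z y x i = some j) : i ≤ j := by
  unfold tst at h
  rw [Fin.le_def]
  split_ifs at h <;> simp at h <;> subst h <;> simp <;> omega

lemma arun_tst_three {n : ℕ} (hn : 3 < n) (t : ℕ) (s : Fin n) (D : List ℕ) (z y : ℕ) (l : List ℕ) :
    arun (tst hn t s D z y) l ⟨3, by omega⟩ = some ⟨3, by omega⟩ := by
  induction l with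
  | nil => simp [arun]
  | cons x l ih => simp [arun, tst] ; simpa [tst] using ih

lemma arun_tst_two {n : ℕ} (hn : 3 < n) (t : ℕ) (s : Fin n) (D : List ℕ) (z y : ℕ) (l : List ℕ) :
    arun (tst hn t s D z y) l ⟨2, by omega⟩ = some ⟨3, by omega⟩ ↔ ∃ r, l = y :: r := by
  cases l with
  | nil => simp [arun]
  | cons x l =>
    have := arun_tst_three hn t s D z y l
    by_cases hx : x = y
    · simp only [arun]
      have h2 : tst hn t s D z y x ⟨2, by omega⟩ = some ⟨3, by omega⟩ := by simp [tst, hx]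
      rw [h2]; simp [this, hx]
    · have h2 : tst hn t s D z y x ⟨2, by omega⟩ = none := by simp [tst, hx]
      simp [arun, h2, hx]

lemma arun_tst_zero {n : ℕ} (hn : 3 < n) (t : ℕ) (s : Fin n) (D : List ℕ) (z y : ℕ) (A : List ℕ)
    (hA : t ∉ A) :
    arun (tst hn t s D z y) (A ++ [t]) ⟨0, by omega⟩ = some s := by
  induction A with
  | nil => simp [arun, tst]
  | cons x l ih =>
    simp at hA
    have h2 : tst hn t s D z y x ⟨0, by omega⟩ = some ⟨0, by omega⟩ := by
      simp [tst, Ne.symm hA.1]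
    simp [arun, h2, ih hA.2]

lemma arun_tst_one {n : ℕ} (hn : 3 < n) (t : ℕ) (s : Fin n) (D : List ℕ) (z y : ℕ) (C : List ℕ)
    (hC : ∀ x ∈ C, x ∈ D) (hz : z ∉ D) :
    arun (tst hn t s D z y) (C ++ [z]) ⟨1, by omega⟩ = some ⟨2, by omega⟩ := by
  induction C with
  | nil => simp [arun, tst, hz]
  | cons x l ih =>
    simp at hC
    have h2 : tst hn t s D z y x ⟨1, by omega⟩ = some ⟨1, by omega⟩ := by
      simp [tst, hC.1]
    simp [arun, h2, ih hC.2]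

/-- Every repeated letter has a once-occurring letter between any two of its occurrences. -/
def Good (L : List ℕ) : Prop :=
  ∀ X x Y Z, L = X ++ x :: (Y ++ x :: Z) → ∃ t ∈ Y, L.count t = 1

lemma next_letter {n : ℕ} (hn : 3 < n) {P Q : List ℕ}
    (h : ∀ f : ℕ → Matrix (Fin n) (Fin n) (ZMod 2),
      (∀ x, (f x).BlockTriangular id) → (P.map f).prod = (Q.map f).prod)
    (A : List ℕ) (t : ℕ) (C : List ℕ) (y : ℕ) (suf rest : List ℕ) (htA : t ∉ A) (hC : C.Nodup)
    (hP : P = A ++ t :: C ++ y :: suf) (hQ : Q = A ++ t :: C ++ rest) :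
    ∃ r, rest = y :: r := by
  rcases List.eq_nil_or_concat C with rfl | ⟨D, z, rfl⟩
  · have h1 := arun_eq_of_sat h (tst hn t ⟨2, by omega⟩ [] 0 y) (tst_le hn _ _ _ _ _)
      ⟨0, by omega⟩ ⟨3, by omega⟩
    rw [hP, hQ, arun_append _ (A ++ [t]), arun_append _ (A ++ [t]),
      arun_tst_zero hn _ _ _ _ _ _ htA] at h1
    simp only [Option.bind_some] at h1
    rw [arun_tst_two, arun_tst_two] at h1
    exact h1.1 ⟨_, rfl⟩
  · have h1 := arun_eq_of_sat h (tst hn t ⟨1, by omega⟩ D z y) (tst_le hn _ _ _ _ _)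
      ⟨0, by omega⟩ ⟨3, by omega⟩
    have hz : z ∉ D := by
      rw [List.concat_eq_append] at hC
      have := List.nodup_append.1 hC
      intro hz
      exact this.2.2 z hz z (by simp) rfl
    have e : ∀ r, A ++ t :: D.concat z ++ r = (A ++ [t]) ++ ((D ++ [z]) ++ r) := by
      intro r; simp
    rw [hP, hQ, e, e, arun_append, arun_append _ (A ++ [t]), arun_tst_zero hn _ _ _ _ _ _ htA] at h1
    simp only [Option.bind_some] at h1
    rw [arun_append, arun_append _ (D ++ [z]), arun_tst_one hn _ _ _ _ _ _ (fun x hx => hx) hz] at h1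
    simp only [Option.bind_some] at h1
    rw [arun_tst_two, arun_tst_two] at h1
    exact h1.1 ⟨_, rfl⟩

lemma last_sat (pr : ℕ → Prop) (l : List ℕ) (h : ∃ x ∈ l, pr x) :
    ∃ A t C, l = A ++ t :: C ∧ pr t ∧ ∀ c ∈ C, ¬ pr c := by
  induction l with
  | nil => simp at h
  | cons x l ih =>
    by_cases hl : ∃ x ∈ l, pr x
    · obtain ⟨A, t, C, rfl, h1, h2⟩ := ih hl
      exact ⟨x :: A, t, C, by simp, h1, h2⟩
    · refine ⟨[], x, l, rfl, ?_, ?_⟩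
      · obtain ⟨y, hy, hp⟩ := h
        rcases List.mem_cons.1 hy with rfl | hy
        · exact hp
        · exact absurd ⟨y, hy, hp⟩ hl
      · intro c hc hp; exact hl ⟨c, hc, hp⟩

lemma dup_split {C : List ℕ} (h : ¬ C.Nodup) : ∃ X x Y Z, C = X ++ x :: (Y ++ x :: Z) := by
  induction C with
  | nil => simp at h
  | cons a C ih =>
    by_cases ha : a ∈ C
    · obtain ⟨Y, Z, rfl⟩ := List.append_of_mem ha
      exact ⟨[], a, Y, Z, rfl⟩
    · have : ¬ C.Nodup := fun hh => h (List.nodup_cons.2 ⟨ha, hh⟩)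
      obtain ⟨X, x, Y, Z, rfl⟩ := ih this
      exact ⟨a :: X, x, Y, Z, rfl⟩

lemma prefix_lemma {n : ℕ} (hn : 3 < n) {P Q : List ℕ}
    (h : ∀ f : ℕ → Matrix (Fin n) (Fin n) (ZMod 2),
      (∀ x, (f x).BlockTriangular id) → (P.map f).prod = (Q.map f).prod)
    (hG : Good P) (t0 : ℕ) (Q0 : List ℕ) (ht0 : P.count t0 = 1)
    (hQ : Q = t0 :: Q0) : ∀ pre suf, P = t0 :: pre ++ suf → ∃ rest, Q = t0 :: pre ++ rest := by
  intro pre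
  induction pre using List.reverseRecOn with
  | nil => intro suf _; exact ⟨Q0, by simpa using hQ⟩
  | append_singleton pre y ih =>
    intro suf hs
    obtain ⟨rest, hr⟩ := ih (y :: suf) (by simpa using hs)
    obtain ⟨A, t, C, hpre, ht, hC⟩ := last_sat (fun x => P.count x = 1) (t0 :: pre) ⟨t0, by simp, ht0⟩
    have hP' : P = A ++ t :: C ++ y :: suf := by rw [← hpre]; simpa using hs
    have htA : t ∉ A := by
      intro hm
      rw [hP'] at ht
      have := List.count_pos_iff.2 hm
      simp [List.count_cons] at ht
      omega
    have hCn : C.Nodup := by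
      by_contra hd
      obtain ⟨X, x, Y, Z, rfl⟩ := dup_split hd
      obtain ⟨t', ht', hc⟩ := hG (A ++ t :: X) x Y (Z ++ y :: suf) (by rw [hP']; simp)
      exact hC t' (by simp [ht']) hc
    obtain ⟨r, hr'⟩ := next_letter hn h A t C y suf rest htA hCn hP' (by rw [hr, hpre])
    exact ⟨r, by rw [hr, hr']; simp⟩

lemma isoterm {n : ℕ} (hn : 3 < n) {p q : FreeSemigroup ℕ} (h : Satisfies (TriSub n) p q)
    (hG : Good (wl p)) : p = q := by
  obtain ⟨t0, h0p, h0q⟩ : ∃ t, t ∉ wl p ∧ t ∉ wl q := by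
    obtain ⟨t, ht⟩ := Infinite.exists_notMem_finset ((wl p).toFinset ∪ (wl q).toFinset)
    exact ⟨t, by simpa using ht⟩
  obtain ⟨tE, hEp, hEq, hne⟩ : ∃ t, t ∉ wl p ∧ t ∉ wl q ∧ t ≠ t0 := by
    obtain ⟨t, ht⟩ := Infinite.exists_notMem_finset ((wl p).toFinset ∪ (wl q).toFinset ∪ {t0})
    refine ⟨t, ?_⟩
    simp at ht
    tauto
  rw [satisfies_iff] at h
  have h' : ∀ f : ℕ → Matrix (Fin n) (Fin n) (ZMod 2), (∀ x, (f x).BlockTriangular id) →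
      ((t0 :: (wl p ++ [tE])).map f).prod = ((t0 :: (wl q ++ [tE])).map f).prod := by
    intro f hf
    simp [h f hf]
  have hc0 : (t0 :: (wl p ++ [tE])).count t0 = 1 := by
    simp [List.count_cons, List.count_eq_zero.2 h0p, hne]
  have hcE : (t0 :: (wl p ++ [tE])).count tE = 1 := by
    simp [List.count_cons, List.count_eq_zero.2 hEp, hne.symm]
  have hG' : Good (t0 :: (wl p ++ [tE])) := by
    intro X x Y Z hX
    have hx2 : 2 ≤ (t0 :: (wl p ++ [tE])).count x := by
      rw [hX]; simp [List.count_cons]; omega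
    have hx0 : x ≠ t0 := by rintro rfl; omega
    have hxE : x ≠ tE := by rintro rfl; omega
    rcases X with _ | ⟨a, X⟩
    · simp at hX; exact absurd hX.1.symm hx0
    rcases List.eq_nil_or_concat Z with rfl | ⟨Z, b, rfl⟩
    · simp only [List.cons_append, List.cons.injEq] at hX
      have h2 : wl p ++ [tE] = (X ++ x :: Y) ++ [x] := by rw [hX.2]; simp
      have h3 := (List.append_inj' h2 rfl).2
      simp at h3
      exact absurd h3.symm hxE
    · simp at hX
      have h2 : wl p ++ [tE] = (X ++ x :: (Y ++ x :: Z)) ++ [b] := by rw [hX.2]; simp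
      have h3 := List.append_inj' h2 rfl
      obtain ⟨t, ht, hct⟩ := hG X x Y Z h3.1
      refine ⟨t, ht, ?_⟩
      have htp : t ∈ wl p := by rw [h3.1]; simp [ht]
      have e1 : t0 ≠ t := by rintro rfl; exact h0p htp
      have e2 : tE ≠ t := by rintro rfl; exact hEp htp
      simp [List.count_cons, hct, e1, e2]
  obtain ⟨rest, hr⟩ := prefix_lemma hn h' hG' t0 _ hc0 rfl (wl p ++ [tE]) [] (by simp)
  have hr2 : wl q ++ [tE] = wl p ++ tE :: rest := by simpa using hr
  rcases List.eq_nil_or_concat rest with rfl | ⟨Z, b, rfl⟩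
  · exact (wl_inj (List.append_inj' hr2 rfl).1).symm
  · exfalso
    have h4 : wl q ++ [tE] = (wl p ++ tE :: Z) ++ [b] := by rw [hr2]; simp
    have h5 := (List.append_inj' h4 rfl).1
    exact hEq (by rw [h5]; simp)

/-! ### Words with no short nontrivial consequences -/

lemma good_of {L : List ℕ} {ℓ K : ℕ}
    (h1 : ∀ A W C D, L = A ++ (W ++ (C ++ (W ++ D))) → W.length < ℓ)
    (h2 : ∀ A w C D, L = A ++ w :: (C ++ w :: D) → K ≤ C.length + 1)
    (p : FreeSemigroup ℕ) (φ : ℕ → FreeSemigroup ℕ) (a b : List ℕ)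
    (hL : a ++ wl (FreeSemigroup.lift φ p) ++ b = L) (hk : (wl p).length * ℓ ≤ K) (hℓ : 0 < ℓ) :
    Good (wl p) := by
  intro X x Y Z hX
  by_contra hcon
  push Not at hcon
  rw [wl_lift] at hL
  have short : ∀ t, 2 ≤ (wl p).count t → (wl (φ t)).length < ℓ := by
    intro t ht
    have hd : ∃ X Y Z, wl p = X ++ t :: (Y ++ t :: Z) := by
      have hm : t ∈ wl p := List.count_pos_iff.1 (by omega)
      obtain ⟨X, R, hXR, hnot⟩ := List.eq_append_cons_of_mem hm
      have : t ∈ R := by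
        rw [hXR] at ht
        simp [List.count_cons, List.count_eq_zero.2 hnot] at ht
        exact ht
      obtain ⟨Y, Z, rfl⟩ := List.append_of_mem this
      exact ⟨X, Y, Z, hXR⟩
    obtain ⟨X, Y, Z, hp⟩ := hd
    apply h1 (a ++ X.flatMap (fun x => wl (φ x))) _ (Y.flatMap (fun x => wl (φ x)))
      (Z.flatMap (fun x => wl (φ x)) ++ b)
    rw [← hL, hp]; simp
  have hx : (wl (φ x)).length < ℓ := by
    apply short
    rw [hX]; simp [List.count_cons]; omega
  have hY : (Y.flatMap (fun x => wl (φ x))).length ≤ Y.length * ℓ := by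
    have hall : ∀ t ∈ Y, (wl (φ t)).length ≤ ℓ := by
      intro t ht
      apply le_of_lt
      apply short
      have hm : t ∈ wl p := by rw [hX]; simp [ht]
      have := List.count_pos_iff.2 hm
      have := hcon t ht
      omega
    clear hX hcon
    induction Y with
    | nil => simp
    | cons y Y ih =>
      have := ih (fun t ht => hall t (by simp [ht]))
      have := hall y (by simp)
      simp only [List.flatMap_cons, List.length_append, List.length_cons]
      nlinarith
  have hw : ∃ w W, wl (φ x) = w :: W := ⟨_, _, rfl⟩
  obtain ⟨w, W, hw⟩ := hw
  have := h2 (a ++ X.flatMap (fun x => wl (φ x))) w (W ++ Y.flatMap (fun x => wl (φ x)))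
    (W ++ Z.flatMap (fun x => wl (φ x)) ++ b) (by rw [← hL, hX]; simp [hw])
  have hlen : (wl p).length = X.length + Y.length + Z.length + 2 := by
    rw [hX]; simp; omega
  rw [hlen] at hk
  rw [hw] at hx
  simp only [List.length_append, List.length_cons] at hx this
  nlinarith [Nat.zero_le (X.length * ℓ), Nat.zero_le (Z.length * ℓ)]


/-! ### Path counting functions -/

section Paths
variable {Λ : Type}

/-- One step of path counting: `(op α f g) l` is the sum over all splittings `l = l₁ ++ λ :: l₂`
of `α ^ |l₁| * f λ * g l₂`. -/
def op (α : ZMod 2) (f : Λ → ZMod 2) (g : List Λ → ZMod 2) : List Λ → ZMod 2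
  | [] => 0
  | x :: l => α * op α f g l + f x * g l

lemma op_add_left (α : ZMod 2) (f f' : Λ → ZMod 2) (g : List Λ → ZMod 2) :
    op α (f + f') g = op α f g + op α f' g := by
  funext l
  induction l with
  | nil => simp [op]
  | cons x l ih => simp only [op, Pi.add_apply] at *; rw [ih]; ring

lemma op_add_right (α : ZMod 2) (f : Λ → ZMod 2) (g g' : List Λ → ZMod 2) :
    op α f (g + g') = op α f g + op α f g' := by
  funext l
  induction l with
  | nil => simp [op]
  | cons x l ih => simp only [op, Pi.add_apply] at *; rw [ih]; ring

lemma op_smul_left (α c : ZMod 2) (f : Λ → ZMod 2) (g : List Λ → ZMod 2) :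
    op α (c • f) g = c • op α f g := by
  funext l
  induction l with
  | nil => simp [op]
  | cons x l ih => simp only [op, Pi.smul_apply, smul_eq_mul] at *; rw [ih]; ring

lemma op_smul_right (α c : ZMod 2) (f : Λ → ZMod 2) (g : List Λ → ZMod 2) :
    op α f (c • g) = c • op α f g := by
  funext l
  induction l with
  | nil => simp [op]
  | cons x l ih => simp only [op, Pi.smul_apply, smul_eq_mul] at *; rw [ih]; ring

lemma op_zero_left (α : ZMod 2) (g : List Λ → ZMod 2) : op α 0 g = 0 := by
  simpa using op_smul_left α 0 0 g

lemma op_zero_right (α : ZMod 2) (f : Λ → ZMod 2) : op α f 0 = 0 := by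
  simpa using op_smul_right α 0 f 0

variable {ι : Type} (fs : ι → Λ → ZMod 2)

/-- The universal path-counting functions. -/
def inv (α : ZMod 2) : List (ι × ZMod 2) → List Λ → ZMod 2
  | [] => fun l => α ^ l.length
  | (k, β) :: τ => op α (fs k) (inv β τ)

/-- Span of the path-counting functions with at most `d` jumps. -/
def Wsp (α : ZMod 2) (d : ℕ) : Submodule (ZMod 2) (List Λ → ZMod 2) :=
  Submodule.span (ZMod 2) {g | ∃ τ : List (ι × ZMod 2), τ.length ≤ d ∧ g = inv fs α τ}

lemma op_mem (α β : ZMod 2) (d : ℕ) (f : Λ → ZMod 2) (g : List Λ → ZMod 2)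
    (hf : f ∈ Submodule.span (ZMod 2) (Set.range fs)) (hg : g ∈ Wsp fs β d) :
    op α f g ∈ Wsp fs α (d + 1) := by
  induction hf using Submodule.span_induction with
  | mem f hf =>
    obtain ⟨k, rfl⟩ := hf
    unfold Wsp at hg
    induction hg using Submodule.span_induction with
    | mem g hg =>
      obtain ⟨τ, hτ, rfl⟩ := hg
      exact Submodule.subset_span ⟨(k, β) :: τ, by simpa using hτ, rfl⟩
    | zero => rw [op_zero_right]; exact Submodule.zero_mem _
    | add g g' _ _ h h' => rw [op_add_right]; exact Submodule.add_mem _ h h'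
    | smul c g _ h => rw [op_smul_right]; exact Submodule.smul_mem _ _ h
  | zero => rw [op_zero_left]; exact Submodule.zero_mem _
  | add f f' _ _ h h' => rw [op_add_left]; exact Submodule.add_mem _ h h'
  | smul c f _ h => rw [op_smul_left]; exact Submodule.smul_mem _ _ h

lemma entry_eq {n : ℕ} (A : Λ → Matrix (Fin n) (Fin n) (ZMod 2))
    (α : Fin n → ZMod 2) (hα : ∀ x i, A x i i = α i) (hA : ∀ x i j, j < i → A x i j = 0)
    (i j : Fin n) :
    (fun l : List Λ => (l.map A).prod i j) =
      (if i = j then inv fs (α i) [] else 0) +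
        ∑ c ∈ Finset.univ.filter (fun c => i < c),
          op (α i) (fun x => A x i c) (fun l => (l.map A).prod c j) := by
  funext l
  induction l with
  | nil =>
    by_cases h : i = j
    · simp [h, inv, op]
    · simp [h, op, Matrix.one_apply]
  | cons x l ih =>
    simp only [Pi.add_apply, Finset.sum_apply] at ih ⊢
    simp only [List.map_cons, List.prod_cons, Matrix.mul_apply, op]
    rw [Finset.sum_add_distrib, ← Finset.mul_sum]
    have h1 : ∑ k, A x i k * (l.map A).prod k j = α i * (l.map A).prod i j +
        ∑ c ∈ Finset.univ.filter (fun c => i < c), A x i c * (l.map A).prod c j := by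
      rw [← hα x i]
      rw [Finset.sum_filter]
      rw [← Finset.add_sum_erase _ _ (Finset.mem_univ i),
        ← Finset.add_sum_erase _ (fun c => if i < c then A x i c * (l.map A).prod c j else 0)
          (Finset.mem_univ i)]
      simp only [lt_irrefl, if_false, zero_add]
      congr 1
      apply Finset.sum_congr rfl
      intro c hc
      have hc' : c ≠ i := Finset.ne_of_mem_erase hc
      rcases lt_or_gt_of_ne hc' with h | h
      · rw [hA x i c h, if_neg (not_lt.2 h.le), zero_mul]
      · rw [if_pos h]
    rw [h1, ih, mul_add]
    have h2 : (if i = j then inv fs (α i) [] else 0 : List Λ → ZMod 2) (x :: l) =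
        α i * (if i = j then inv fs (α i) [] else 0 : List Λ → ZMod 2) l := by
      split_ifs
      · simp [inv, pow_succ']
      · simp
    rw [h2]; ring

lemma entry_mem {n : ℕ} (A : Λ → Matrix (Fin n) (Fin n) (ZMod 2))
    (α : Fin n → ZMod 2) (hα : ∀ x i, A x i i = α i) (hA : ∀ x i j, j < i → A x i j = 0)
    (hs : ∀ i j, i < j → (fun x => A x i j) ∈ Submodule.span (ZMod 2) (Set.range fs)) (j : Fin n) :
    ∀ d : ℕ, ∀ i : Fin n, n ≤ i.val + d + 1 →
      (fun l : List Λ => (l.map A).prod i j) ∈ Wsp fs (α i) d := by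
  intro d
  induction d with
  | zero =>
    intro i hi
    rw [entry_eq fs A α hα hA]
    apply Submodule.add_mem
    · split_ifs
      · exact Submodule.subset_span ⟨[], by simp, rfl⟩
      · exact Submodule.zero_mem _
    · apply Submodule.sum_mem
      intro c hc
      have h1 : i < c := by simpa using hc
      have := c.2
      rw [Fin.lt_def] at h1
      omega
  | succ d ih =>
    intro i hi
    rw [entry_eq fs A α hα hA]
    apply Submodule.add_mem
    · split_ifs
      · exact Submodule.subset_span ⟨[], by simp, rfl⟩
      · exact Submodule.zero_mem _
    · apply Submodule.sum_mem
      intro c hc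
      have h1 : i < c := by simpa using hc
      apply op_mem fs _ (α c) d _ _ (hs i c h1)
      apply ih
      rw [Fin.lt_def] at h1
      omega

lemma prod_eq_of_inv {n : ℕ} (A : Λ → Matrix (Fin n) (Fin n) (ZMod 2))
    (α : Fin n → ZMod 2) (hα : ∀ x i, A x i i = α i) (hA : ∀ x i j, j < i → A x i j = 0)
    (hs : ∀ i j, i < j → (fun x => A x i j) ∈ Submodule.span (ZMod 2) (Set.range fs))
    (l l' : List Λ)
    (h : ∀ a τ, τ.length ≤ n → inv fs a τ l = inv fs a τ l') :
    (l.map A).prod = (l'.map A).prod := by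
  ext i j
  have h1 := entry_mem fs A α hα hA hs j n i (by omega)
  have h2 : Wsp fs (α i) n ≤ LinearMap.ker
      ((LinearMap.proj l : (List Λ → ZMod 2) →ₗ[ZMod 2] ZMod 2) - LinearMap.proj l') := by
    apply Submodule.span_le.2
    rintro g ⟨τ, hτ, rfl⟩
    simp [h (α i) τ hτ]
  have h3 := h2 h1
  simpa [sub_eq_zero] using h3

/-- Pigeonhole. -/
lemma pigeon [Fintype ι] [Nonempty ι] (n N : ℕ)
    (hN : 2 * ((n + 1) * (2 * Fintype.card ι) ^ n) < N) (X : (Fin N → Bool) → List Λ) :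
    ∃ e e', e ≠ e' ∧ ∀ a τ, τ.length ≤ n → inv fs a τ (X e) = inv fs a τ (X e') := by
  classical
  let Ty := ZMod 2 × Σ r : Fin (n + 1), (Fin r → ι × ZMod 2)
  let F : (Fin N → Bool) → (Ty → ZMod 2) := fun e t => inv fs t.1 (List.ofFn t.2.2) (X e)
  have hcard : Fintype.card (Ty → ZMod 2) < Fintype.card (Fin N → Bool) := by
    simp only [Fintype.card_fun, ZMod.card, Fintype.card_bool, Fintype.card_fin]
    apply Nat.pow_lt_pow_right (by norm_num)
    refine lt_of_le_of_lt ?_ hN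
    simp only [Ty, Fintype.card_prod, Fintype.card_sigma, ZMod.card, Fintype.card_fun,
      Fintype.card_fin]
    apply Nat.mul_le_mul_left
    calc ∑ r : Fin (n + 1), (Fintype.card ι * 2) ^ (r : ℕ)
        ≤ ∑ r : Fin (n + 1), (2 * Fintype.card ι) ^ n := by
          apply Finset.sum_le_sum
          intro r _
          rw [mul_comm]
          apply Nat.pow_le_pow_right
          · have := Fintype.card_pos (α := ι); omega
          · have := r.2; omega
      _ = _ := by simp
  obtain ⟨e, e', hne, heq⟩ := Fintype.exists_ne_map_eq_of_card_lt F hcard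
  refine ⟨e, e', hne, ?_⟩
  intro a τ hτ
  have := congrFun heq (a, ⟨⟨τ.length, by omega⟩, fun k => τ.get k⟩)
  simpa [F] using this

end Paths

/-! ### Polynomial filtration -/

section Fil
variable {R : Type} [CommRing R] [Algebra (ZMod 2) R] (V : Submodule (ZMod 2) R)

/-- Upper triangular matrices whose `(i, j)` entry has degree at most `j - i`. -/
def Fil {n : ℕ} (M : Matrix (Fin n) (Fin n) R) : Prop :=
  ∀ i j, (j < i → M i j = 0) ∧ (i ≤ j → M i j ∈ V ^ (j.val - i.val))

lemma Fil.mul {n : ℕ} {M M' : Matrix (Fin n) (Fin n) R} (h : Fil V M) (h' : Fil V M') :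
    Fil V (M * M') := by
  intro i j
  constructor
  · intro hij
    rw [Matrix.mul_apply]
    apply Finset.sum_eq_zero
    intro k _
    rcases lt_or_ge k i with hk | hk
    · rw [(h i k).1 hk, zero_mul]
    · rw [(h' k j).1 (lt_of_lt_of_le hij hk), mul_zero]
  · intro hij
    rw [Matrix.mul_apply]
    apply Submodule.sum_mem
    intro k _
    rcases lt_or_ge k i with hk | hk
    · rw [(h i k).1 hk, zero_mul]; exact Submodule.zero_mem _
    rcases lt_or_ge j k with hk' | hk'
    · rw [(h' k j).1 hk', mul_zero]; exact Submodule.zero_mem _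
    have := Submodule.mul_mem_mul ((h i k).2 hk) ((h' k j).2 hk')
    rw [← pow_add] at this
    rw [Fin.le_def] at hk hk'
    rwa [show k.val - i.val + (j.val - k.val) = j.val - i.val by omega] at this

lemma Fil.one {n : ℕ} : Fil V (1 : Matrix (Fin n) (Fin n) R) := by
  intro i j
  constructor
  · intro h; exact Matrix.one_apply_ne (ne_of_gt h)
  · intro h
    rcases eq_or_lt_of_le h with rfl | h
    · simp only [Matrix.one_apply_eq, Nat.sub_self, pow_zero]
      exact Submodule.one_le.1 le_rfl
    · rw [Matrix.one_apply_ne (ne_of_lt h)]; exact Submodule.zero_mem _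

lemma Fil.prod {n : ℕ} (l : List (Matrix (Fin n) (Fin n) R)) (h : ∀ M ∈ l, Fil V M) :
    Fil V l.prod := by
  induction l with
  | nil => exact Fil.one V
  | cons M l ih =>
    rw [List.prod_cons]
    exact Fil.mul V (h M (by simp)) (ih (fun M' hM' => h M' (by simp [hM'])))

end Fil


/-! ### The construction -/

/-- The two letters of a site, in one of two orders. -/
def pr2 (s : ℕ) (b : Bool) : List ℕ := if b then [2 * s + 1, 2 * s] else [2 * s, 2 * s + 1]

/-- A block, coded by a row of bits. -/
def blk (Q B : ℕ) (x : ℕ → Bool) : List ℕ :=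
  (List.range B).flatMap (fun s => pr2 s (x (s % (Q + 1))))

/-- The `i`-th row: binary code of `i`, then the payload bit. -/
def row (Q : ℕ) (e : ℕ → Bool) (i : ℕ) : ℕ → Bool := fun q => if q < Q then i.testBit q else e i

/-- The word. -/
def wrd (Q B N : ℕ) (e : ℕ → Bool) : List ℕ :=
  (List.range N).flatMap (fun i => blk Q B (row Q e i))

/-- The bit at a global site. -/
def bitv (Q B : ℕ) (e : ℕ → Bool) (g : ℕ) : Bool := row Q e (g / B) (g % B % (Q + 1))

/-- The letter at a position. -/
def ltr (Q B : ℕ) (e : ℕ → Bool) (p : ℕ) : ℕ :=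
  2 * (p / 2 % B) + (if bitv Q B e (p / 2) then 1 - p % 2 else p % 2)

lemma flatMap_range (B N : ℕ) (F : ℕ → List ℕ) :
    (List.range N).flatMap (fun i => (List.range B).flatMap (fun s => F (B * i + s))) =
      (List.range (B * N)).flatMap F := by
  induction N with
  | zero => simp
  | succ N ih =>
    rw [List.range_succ, List.flatMap_append, ih, Nat.mul_succ, List.range_add,
      List.flatMap_append]
    simp [List.flatMap_map]

lemma flatMap_pairs (m : ℕ) (h : ℕ → ℕ) :
    (List.range m).flatMap (fun g => [h (2 * g), h (2 * g + 1)]) = (List.range (2 * m)).map h := by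
  induction m with
  | zero => simp
  | succ m ih =>
    rw [List.range_succ, List.flatMap_append, ih, show 2 * (m + 1) = 2 * m + 1 + 1 by ring,
      List.range_succ, List.range_succ]
    simp

lemma wrd_eq (Q B N : ℕ) (hB : 0 < B) (e : ℕ → Bool) :
    wrd Q B N e = (List.range (2 * (B * N))).map (ltr Q B e) := by
  rw [← flatMap_pairs, ← flatMap_range]
  unfold wrd blk
  apply List.flatMap_congr
  intro i _
  apply List.flatMap_congr
  intro s hs
  have hs' : s < B := by simpa using hs
  have h1 : (B * i + s) / B = i := by
    rw [Nat.mul_add_div hB, Nat.div_eq_of_lt hs', add_zero]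
  have h2 : (B * i + s) % B = s := by
    rw [Nat.mul_add_mod, Nat.mod_eq_of_lt hs']
  have h3 : 2 * (B * i + s) / 2 = B * i + s := by omega
  have h4 : (2 * (B * i + s) + 1) / 2 = B * i + s := by omega
  have h5 : 2 * (B * i + s) % 2 = 0 := by omega
  have h6 : (2 * (B * i + s) + 1) % 2 = 1 := by omega
  simp only [ltr, bitv, h3, h4, h5, h6, h1, h2, pr2]
  split_ifs <;> simp

lemma ltr_div (Q B : ℕ) (e : ℕ → Bool) (p : ℕ) : ltr Q B e p / 2 = p / 2 % B := by
  unfold ltr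
  split_ifs <;> omega

lemma ltr_bit (Q B : ℕ) (e e' : ℕ → Bool) (g g' : ℕ)
    (h : ltr Q B e (2 * g) = ltr Q B e' (2 * g')) :
    bitv Q B e g = bitv Q B e' g' := by
  unfold ltr at h
  have h3 : 2 * g / 2 = g := by omega
  have h4 : 2 * g' / 2 = g' := by omega
  rw [h3, h4] at h
  cases h1 : bitv Q B e g <;> cases h2 : bitv Q B e' g' <;> simp [h1, h2] at h ⊢ <;> omega

lemma ltr_dist (Q B : ℕ) (e : ℕ → Bool) (p p' : ℕ) (hlt : p < p')
    (h : ltr Q B e p = ltr Q B e p') : p + (2 * B - 1) ≤ p' := by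
  have h1 : p / 2 % B = p' / 2 % B := by rw [← ltr_div Q B e, ← ltr_div Q B e, h]
  rcases eq_or_ne (p / 2) (p' / 2) with h2 | h2
  · exfalso
    unfold ltr at h
    rw [h2] at h
    have : p % 2 = 0 := by omega
    have : p' % 2 = 1 := by omega
    split_ifs at h <;> omega
  · have h3 : p / 2 < p' / 2 := by omega
    have h4 : B ∣ p' / 2 - p / 2 := (Nat.modEq_iff_dvd' h3.le).1 h1
    have h5 := Nat.le_of_dvd (by omega) h4
    omega

lemma row_inj (Q : ℕ) (e : ℕ → Bool) (i i' : ℕ) (hi : i < 2 ^ Q) (hi' : i' < 2 ^ Q)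
    (h : ∀ q < Q, row Q e i q = row Q e i' q) : i = i' := by
  apply Nat.eq_of_testBit_eq
  intro q
  by_cases hq : q < Q
  · have := h q hq
    simpa [row, hq] using this
  · have h1 : 2 ^ Q ≤ 2 ^ q := Nat.pow_le_pow_right (by norm_num) (by omega)
    rw [Nat.testBit_lt_two_pow (lt_of_lt_of_le hi h1), Nat.testBit_lt_two_pow (lt_of_lt_of_le hi' h1)]

lemma ltr_unique (Q M : ℕ) (hM : 2 ≤ M) (e : ℕ → Bool) (p p' : ℕ) (hlt : p < p')
    (hp' : p' + 4 * (Q + 1) ≤ 2 * ((Q + 1) * M * 2 ^ Q))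
    (h : ∀ d < 4 * (Q + 1), ltr Q ((Q + 1) * M) e (p + d) = ltr Q ((Q + 1) * M) e (p' + d)) :
    False := by
  obtain ⟨q', hq'⟩ : ∃ q', q' = Q + 1 := ⟨_, rfl⟩
  obtain ⟨B, hB⟩ : ∃ B, B = q' * M := ⟨_, rfl⟩
  rw [← hq', ← hB] at hp' h
  have hB2 : 2 ≤ B := by rw [hB]; nlinarith
  have hq0 : 0 < q' := by omega
  have e0 : p / 2 % B = p' / 2 % B := by
    have := h 0 (by omega)
    rw [← ltr_div Q B e, ← ltr_div Q B e]; simpa using congrArg (· / 2) this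
  have e1 : (p + 1) / 2 % B = (p' + 1) / 2 % B := by
    have := h 1 (by omega)
    rw [← ltr_div Q B e, ← ltr_div Q B e]; simpa using congrArg (· / 2) this
  have e0' : B ∣ p' / 2 - p / 2 := (Nat.modEq_iff_dvd' (by omega)).1 e0
  have e1' : B ∣ (p' + 1) / 2 - (p + 1) / 2 := (Nat.modEq_iff_dvd' (by omega)).1 e1
  have par : p % 2 = p' % 2 := by
    by_contra hne
    have hd : B ∣ 1 := by
      rcases Nat.mod_two_eq_zero_or_one p with h0 | h0
      · have : (p' + 1) / 2 - (p + 1) / 2 = (p' / 2 - p / 2) + 1 := by omega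
        rw [this] at e1'
        exact (Nat.dvd_add_right e0').1 e1'
      · have : p' / 2 - p / 2 = ((p' + 1) / 2 - (p + 1) / 2) + 1 := by omega
        rw [this] at e0'
        exact (Nat.dvd_add_right e1').1 e0'
    have := Nat.le_of_dvd one_pos hd
    omega
  obtain ⟨D, hD⟩ := e0'
  have hpp : p' = p + 2 * (B * D) := by omega
  have hD0 : 0 < D := by
    rcases Nat.eq_zero_or_pos D with rfl | h0
    · omega
    · exact h0
  obtain ⟨c, hc⟩ : ∃ c, c = (p + 2 * q' - 1) / (2 * q') := ⟨_, rfl⟩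
  have hc1 : p ≤ 2 * (q' * c) := by
    have := Nat.lt_div_mul_add (a := p + 2 * q' - 1) (b := 2 * q') (by omega)
    rw [← hc] at this
    have h2 : c * (2 * q') = 2 * (q' * c) := by ring
    omega
  have hc2 : 2 * (q' * c) ≤ p + 2 * q' - 1 := by
    have := Nat.div_mul_le_self (p + 2 * q' - 1) (2 * q')
    rw [← hc] at this
    have h2 : c * (2 * q') = 2 * (q' * c) := by ring
    omega
  have key : ∀ q < q', row Q e (c / M) q = row Q e (c / M + D) q := by
    intro q hq
    have hh := h (2 * (q' * c + q) - p) (by omega)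
    have a1 : p + (2 * (q' * c + q) - p) = 2 * (q' * c + q) := by omega
    have a2 : p' + (2 * (q' * c + q) - p) = 2 * (q' * c + q + B * D) := by omega
    rw [a1, a2] at hh
    have hb := ltr_bit Q B e e _ _ hh
    unfold bitv at hb
    have b1 : (q' * c + q) / B = c / M := by
      rw [hB, ← Nat.div_div_eq_div_mul, Nat.mul_add_div hq0, Nat.div_eq_of_lt hq, add_zero]
    have b2 : (q' * c + q + B * D) / B = c / M + D := by
      rw [Nat.add_mul_div_left _ _ (by omega), b1]
    have b3 : (q' * c + q) % B % q' = q := by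
      rw [hB, Nat.mod_mul_right_mod, Nat.mul_add_mod, Nat.mod_eq_of_lt hq]
    have b4 : (q' * c + q + B * D) % B % q' = q := by
      rw [Nat.add_mul_mod_self_left, b3]
    rw [← hq', b1, b2, b3, b4] at hb
    exact hb
  have hlast : c / M + D < 2 ^ Q := by
    have hlt2 : q' * c + B * D < B * 2 ^ Q := by omega
    have : (q' * c + B * D) / B < 2 ^ Q := Nat.div_lt_of_lt_mul hlt2
    have b2 : (q' * c + B * D) / B = c / M + D := by
      rw [Nat.add_mul_div_left _ _ (by omega), hB, ← Nat.div_div_eq_div_mul,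
        Nat.mul_div_cancel_left _ hq0]
    omega
  have := row_inj Q e (c / M) (c / M + D) (by omega) hlast (fun q hq => key q (by omega))
  omega

lemma map_range_get (m : ℕ) (h : ℕ → ℕ) (A : List ℕ) (w : ℕ) (D : List ℕ)
    (hL : (List.range m).map h = A ++ w :: D) : A.length < m ∧ h A.length = w := by
  have hl := congrArg List.length hL
  simp at hl
  have h1 : A.length < m := by omega
  refine ⟨h1, ?_⟩
  have := congrArg (fun l => l[A.length]?) hL
  simpa [h1] using this

lemma wrd_dist (Q B N : ℕ) (hB : 0 < B) (e : ℕ → Bool) (A : List ℕ) (w : ℕ) (C D : List ℕ)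
    (hL : wrd Q B N e = A ++ w :: (C ++ w :: D)) : 2 * B - 1 ≤ C.length + 1 := by
  rw [wrd_eq Q B N hB] at hL
  have h1 := map_range_get _ _ _ _ _ hL
  have h2 := map_range_get _ _ (A ++ w :: C) w D (by rw [hL]; simp)
  have := ltr_dist Q B e A.length (A ++ w :: C).length (by simp) (h1.2.trans h2.2.symm)
  simp at this
  omega

lemma wrd_unique (Q M : ℕ) (hM : 2 ≤ M) (e : ℕ → Bool) (A W C D : List ℕ)
    (hL : wrd Q ((Q + 1) * M) (2 ^ Q) e = A ++ (W ++ (C ++ (W ++ D)))) :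
    W.length < 4 * (Q + 1) := by
  by_contra hcon
  rw [wrd_eq Q _ _ (by positivity)] at hL
  have hl := congrArg List.length hL
  simp only [List.length_map, List.length_range, List.length_append] at hl
  apply ltr_unique Q M hM e A.length (A.length + W.length + C.length) (by omega) (by omega)
  intro d hd
  obtain ⟨W1, w, W2, hW, hlen⟩ : ∃ W1 w W2, W = W1 ++ w :: W2 ∧ W1.length = d :=
    ⟨W.take d, W[d]'(by omega), W.drop (d + 1), by simp, by simp; omega⟩
  subst hW
  have h1 := map_range_get _ _ (A ++ W1) w
    (W2 ++ (C ++ ((W1 ++ w :: W2) ++ D))) (by rw [hL]; simp)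
  have h2 := map_range_get _ _ (A ++ ((W1 ++ w :: W2) ++ (C ++ W1))) w
    (W2 ++ D) (by rw [hL]; simp)
  have l1 : (A ++ W1).length = A.length + d := by simp; omega
  have l2 : (A ++ ((W1 ++ w :: W2) ++ (C ++ W1))).length =
      A.length + (W1 ++ w :: W2).length + C.length + d := by
    simp only [List.length_append]; omega
  rw [l1] at h1
  rw [l2] at h2
  exact h1.2.trans h2.2.symm

lemma wrd_inj (Q B N : ℕ) (hB : Q < B) (e e' : ℕ → Bool) (h : wrd Q B N e = wrd Q B N e') :
    ∀ i < N, e i = e' i := by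
  intro i hi
  rw [wrd_eq Q B N (by omega), wrd_eq Q B N (by omega)] at h
  rw [List.map_inj_left] at h
  have hlt : B * i + Q < B * N := by
    have : B * (i + 1) ≤ B * N := Nat.mul_le_mul_left _ hi
    rw [Nat.mul_succ] at this
    omega
  have h1 := h (2 * (B * i + Q)) (by simp; omega)
  have hb := ltr_bit Q B e e' _ _ h1
  have b1 : (B * i + Q) / B = i := by
    rw [Nat.mul_add_div (by omega), Nat.div_eq_of_lt hB, add_zero]
  have b2 : (B * i + Q) % B % (Q + 1) = Q := by
    rw [Nat.mul_add_mod, Nat.mod_eq_of_lt hB, Nat.mod_eq_of_lt (by omega)]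
  unfold bitv at hb
  rw [b1, b2] at hb
  simpa [row] using hb

/-! ### The identities hold in `T_n(2)` -/

/-- The bit functions and the constant `1`. -/
noncomputable def Sgen (Q : ℕ) : Finset ((ℕ → Bool) → ZMod 2) := by
  classical
  exact insert 1 ((Finset.range (Q + 1)).image (fun q x => if x q then 1 else 0))

lemma one_mem_Sgen (Q : ℕ) : (1 : (ℕ → Bool) → ZMod 2) ∈ Sgen Q := by
  classical
  simp [Sgen]

lemma bit_mem_Sgen (Q q : ℕ) (hq : q < Q + 1) :
    (fun x : ℕ → Bool => (if x q then 1 else 0 : ZMod 2)) ∈ Sgen Q := by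
  classical
  unfold Sgen
  exact Finset.mem_insert_of_mem (Finset.mem_image.2 ⟨q, by simpa using hq, rfl⟩)

lemma card_Sgen (Q : ℕ) : (Sgen Q).card ≤ Q + 2 := by
  classical
  unfold Sgen
  refine (Finset.card_insert_le _ _).trans ?_
  have := Finset.card_image_le (s := Finset.range (Q + 1))
    (f := fun q (x : ℕ → Bool) => (if x q then 1 else 0 : ZMod 2))
  rw [Finset.card_range] at this
  omega

/-- Polynomials of degree at most one. -/
noncomputable def Vsp (Q : ℕ) : Submodule (ZMod 2) ((ℕ → Bool) → ZMod 2) :=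
  Submodule.span (ZMod 2) (Sgen Q : Set ((ℕ → Bool) → ZMod 2))

lemma one_le_Vsp (Q : ℕ) : 1 ≤ Vsp Q :=
  Submodule.one_le.2 (Submodule.subset_span (one_mem_Sgen Q))

/-- The matrix of a site with function entries. -/
def PM {n : ℕ} (Q : ℕ) (f : ℕ → Matrix (Fin n) (Fin n) (ZMod 2)) (s : ℕ) :
    Matrix (Fin n) (Fin n) ((ℕ → Bool) → ZMod 2) :=
  fun i j x => ((pr2 s (x (s % (Q + 1)))).map f).prod i j

lemma PM_eq {n : ℕ} (Q : ℕ) (f : ℕ → Matrix (Fin n) (Fin n) (ZMod 2)) (s : ℕ) (i j : Fin n) :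
    PM Q f s i j = ((f (2 * s) * f (2 * s + 1)) i j) • (1 : (ℕ → Bool) → ZMod 2) +
      ((f (2 * s + 1) * f (2 * s)) i j - (f (2 * s) * f (2 * s + 1)) i j) •
        (fun x : ℕ → Bool => (if x (s % (Q + 1)) then 1 else 0 : ZMod 2)) := by
  funext x
  simp only [PM, pr2, Pi.add_apply, Pi.smul_apply, smul_eq_mul, Pi.one_apply]
  split_ifs <;> simp

lemma diag_mul {n : ℕ} {a b : Matrix (Fin n) (Fin n) (ZMod 2)} (ha : a.BlockTriangular id)
    (hb : b.BlockTriangular id) (i : Fin n) : (a * b) i i = a i i * b i i := by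
  rw [Matrix.mul_apply]
  apply Finset.sum_eq_single i
  · intro k _ hk
    rcases lt_or_gt_of_ne hk with h | h
    · rw [ha h, zero_mul]
    · rw [hb h, mul_zero]
  · simp

lemma PM_fil {n : ℕ} (Q : ℕ) (f : ℕ → Matrix (Fin n) (Fin n) (ZMod 2))
    (hf : ∀ x, (f x).BlockTriangular id) (s : ℕ) : Fil (Vsp Q) (PM Q f s) := by
  intro i j
  rw [PM_eq]
  constructor
  · intro hij
    rw [(hf _).mul (hf _) hij, (hf _).mul (hf _) hij]
    simp
  · intro hij
    rcases eq_or_lt_of_le hij with rfl | hij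
    · rw [diag_mul (hf _) (hf _), diag_mul (hf _) (hf _), mul_comm (f (2 * s + 1) i i), sub_self,
        zero_smul, add_zero, Nat.sub_self, pow_zero]
      exact Submodule.smul_mem _ _ (Submodule.one_le.1 le_rfl)
    · have hle : Vsp Q ≤ Vsp Q ^ (j.val - i.val) := by
        rw [Fin.lt_def] at hij
        obtain ⟨d, hd⟩ : ∃ d, j.val - i.val = d + 1 := ⟨j.val - i.val - 1, by omega⟩
        rw [hd]
        clear hd
        induction d with
        | zero => simp
        | succ d ih =>
          rw [pow_succ]
          calc Vsp Q ≤ Vsp Q ^ (d + 1) * 1 := by rw [mul_one]; exact ih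
            _ ≤ _ := mul_le_mul' le_rfl (one_le_Vsp Q)
      apply hle
      apply Submodule.add_mem
      · exact Submodule.smul_mem _ _ (Submodule.subset_span (one_mem_Sgen Q))
      · exact Submodule.smul_mem _ _
          (Submodule.subset_span (bit_mem_Sgen Q _ (Nat.mod_lt _ (by omega))))

lemma blk_prod {n : ℕ} (Q B : ℕ) (f : ℕ → Matrix (Fin n) (Fin n) (ZMod 2)) (x : ℕ → Bool) :
    ((blk Q B x).map f).prod =
      (Pi.evalRingHom (fun _ : ℕ → Bool => ZMod 2) x).mapMatrix
        ((List.range B).map (PM Q f)).prod := by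
  rw [map_list_prod, List.map_map]
  unfold blk
  induction B with
  | zero => simp
  | succ B ih =>
    rw [List.range_succ, List.flatMap_append, List.map_append, List.map_append, List.prod_append,
      List.prod_append, ih]
    congr 1
    simp only [List.flatMap_cons, List.flatMap_nil, List.append_nil, List.map_cons, List.map_nil,
      List.prod_cons, List.prod_nil, mul_one, Function.comp]
    rfl

lemma wrd_prod {n : ℕ} (Q B N : ℕ) (f : ℕ → Matrix (Fin n) (Fin n) (ZMod 2)) (e : ℕ → Bool) :
    ((wrd Q B N e).map f).prod =
      (((List.range N).map (row Q e)).map (fun x => ((blk Q B x).map f).prod)).prod := by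
  unfold wrd
  induction N with
  | zero => simp
  | succ N ih =>
    rw [List.range_succ, List.flatMap_append, List.map_append, List.prod_append, ih]
    simp

/-- Extension of a finite bit sequence. -/
def ext0 (N : ℕ) (e : Fin N → Bool) (i : ℕ) : Bool := if h : i < N then e ⟨i, h⟩ else false

open scoped Pointwise in
lemma exists_pair (n Q N : ℕ) (hN : 2 * ((n + 1) * (2 * (Q + 2) ^ n) ^ n) < N) :
    ∃ e e' : ℕ → Bool, (∃ i < N, e i ≠ e' i) ∧
      ∀ B, ∀ f : ℕ → Matrix (Fin n) (Fin n) (ZMod 2), (∀ x, (f x).BlockTriangular id) →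
        ((wrd Q B N e).map f).prod = ((wrd Q B N e').map f).prod := by
  classical
  let fs : ↥(Sgen Q ^ n : Finset ((ℕ → Bool) → ZMod 2)) → (ℕ → Bool) → ZMod 2 := Subtype.val
  have hne : Nonempty ↥(Sgen Q ^ n : Finset ((ℕ → Bool) → ZMod 2)) :=
    (Finset.Nonempty.pow ⟨_, one_mem_Sgen Q⟩).to_subtype
  have hspan : Submodule.span (ZMod 2) (Set.range fs) = Vsp Q ^ n := by
    unfold Vsp
    rw [Submodule.span_pow, ← Finset.coe_pow]
    congr 1
    simp [fs]
  have hcard : Fintype.card ↥(Sgen Q ^ n : Finset ((ℕ → Bool) → ZMod 2)) ≤ (Q + 2) ^ n := by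
    rw [Fintype.card_coe]
    exact Finset.card_pow_le.trans (Nat.pow_le_pow_left (card_Sgen Q) n)
  obtain ⟨e, e', hee, hinv⟩ := pigeon fs n N (lt_of_le_of_lt (by gcongr) hN)
    (fun e => (List.range N).map (row Q (ext0 N e)))
  refine ⟨ext0 N e, ext0 N e', ?_, ?_⟩
  · obtain ⟨i, hi⟩ := Function.ne_iff.1 hee
    exact ⟨i, i.2, by simpa [ext0] using hi⟩
  · intro B f hf
    rw [wrd_prod, wrd_prod]
    have hfil : Fil (Vsp Q) ((List.range B).map (PM Q f)).prod := by
      apply Fil.prod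
      intro M hM
      obtain ⟨s, _, rfl⟩ := List.mem_map.1 hM
      exact PM_fil Q f hf s
    have hdiag : ∀ i, ∃ a : ZMod 2, ∀ x, ((blk Q B x).map f).prod i i = a := by
      intro i
      have h1 := (hfil i i).2 le_rfl
      rw [Nat.sub_self, pow_zero, Submodule.mem_one] at h1
      obtain ⟨a, ha⟩ := h1
      refine ⟨a, fun x => ?_⟩
      rw [blk_prod]
      have := congrFun ha x
      simpa using this.symm
    choose α hα using hdiag
    apply prod_eq_of_inv fs _ α (fun x i => hα i x) _ _ _ _ hinv
    · intro x i j hij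
      rw [blk_prod]
      have := congrFun ((hfil i j).1 hij) x
      simpa using this
    · intro i j hij
      rw [hspan]
      have h1 := (hfil i j).2 hij.le
      have hle : Vsp Q ^ (j.val - i.val) ≤ Vsp Q ^ n :=
        pow_le_pow_right' (one_le_Vsp Q) (by omega)
      have h2 := hle h1
      convert h2 using 1
      funext x
      rw [blk_prod]
      simp

lemma exists_Q (n : ℕ) : ∃ Q : ℕ, 2 * ((n + 1) * (2 * (Q + 2) ^ n) ^ n) < 2 ^ Q := by
  have h := tendsto_pow_const_div_const_pow_of_one_lt (n * n) (r := (2 : ℝ)) (by norm_num)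
  have hc : (0 : ℝ) < 1 / (8 * ((n + 1) * 2 ^ n)) := by positivity
  have h2 := (h.eventually (gt_mem_nhds hc)).and (Filter.eventually_ge_atTop 2)
  obtain ⟨m, hm, hm2⟩ := h2.exists
  obtain ⟨Q, rfl⟩ : ∃ Q, m = Q + 2 := ⟨m - 2, by omega⟩
  refine ⟨Q, ?_⟩
  rw [div_lt_div_iff₀ (by positivity) (by positivity)] at hm
  have h3 : (Q + 2) ^ (n * n) * (8 * ((n + 1) * 2 ^ n)) < 1 * 2 ^ (Q + 2) := by
    exact_mod_cast hm
  rw [mul_pow, ← pow_mul]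
  rw [pow_add] at h3
  nlinarith

end TnProof

open TnProof in
/-- **For each `n > 3`, the semigroup `T_n(2)` of all upper triangular `n × n` matrices over
the two-element field is nonfinitely based.** -/
theorem Tn2_nonfinitely_based (n : ℕ) (hn : 3 < n) : ¬ FinitelyBased ↥(TriSub n) := by
  apply not_fb_of
  intro Bs hBs
  obtain ⟨Q, hQ⟩ := exists_Q n
  obtain ⟨e, e', ⟨i, hi, hei⟩, hsat⟩ := exists_pair n Q (2 ^ Q) hQ
  obtain ⟨k, hk⟩ : ∃ k, ∀ p ∈ Bs, (wl p.1).length ≤ k ∧ (wl p.2).length ≤ k := by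
    refine ⟨∑ p ∈ Bs, ((wl p.1).length + (wl p.2).length), fun p hp => ?_⟩
    have := Finset.single_le_sum (f := fun p : FreeSemigroup ℕ × FreeSemigroup ℕ =>
      (wl p.1).length + (wl p.2).length) (fun _ _ => Nat.zero_le _) hp
    omega
  obtain ⟨M, hM⟩ : ∃ M, M = 2 * k + 2 := ⟨_, rfl⟩
  have hB : Q < (Q + 1) * M := by rw [hM]; nlinarith
  have hw : ∀ e, wrd Q ((Q + 1) * M) (2 ^ Q) e ≠ [] := by
    intro e h
    rw [wrd_eq _ _ _ (by omega)] at h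
    have := congrArg List.length h
    simp [hM] at this
  obtain ⟨u, hu⟩ := exists_wl _ (hw e)
  obtain ⟨v, hv⟩ := exists_wl _ (hw e')
  refine ⟨u, v, ?_, ?_, ?_⟩
  · rw [satisfies_iff, hu, hv]
    exact hsat _
  · rintro rfl
    exact hei (wrd_inj Q _ _ hB e e' (hu.symm.trans hv) i hi)
  · have hK : ∀ m ≤ k, m * (4 * (Q + 1)) ≤ 2 * ((Q + 1) * M) - 1 := by
      intro m hm
      have h1 : m * (4 * (Q + 1)) ≤ k * (4 * (Q + 1)) := Nat.mul_le_mul_right _ hm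
      have h2 : 2 * ((Q + 1) * M) = k * (4 * (Q + 1)) + 4 * (Q + 1) := by rw [hM]; ring
      omega
    have good : ∀ p : FreeSemigroup ℕ, (wl p).length ≤ k → ∀ φ a b,
        a ++ wl (FreeSemigroup.lift φ p) ++ b = wl u → Good (wl p) := by
      intro p hp φ a b h
      exact good_of (L := wl u) (ℓ := 4 * (Q + 1)) (K := 2 * ((Q + 1) * M) - 1)
        (by rw [hu]; exact wrd_unique Q M (by omega) e)
        (by rw [hu]; exact wrd_dist Q _ _ (by omega) e) p φ a b h (hK _ hp) (by omega)
    intro p hp φ a b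
    constructor
    · intro h
      exact isoterm hn (hBs p hp) (good p.1 (hk p hp).1 φ a b h)
    · intro h
      exact (isoterm hn (fun f => (hBs p hp f).symm) (good p.2 (hk p hp).2 φ a b h)).symm
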